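/- (Theorem 1) In a two-candidate election, the margin-of-victory objective MOV(S) = 2 · Σ_{y ⊆ E} w(y) · f(S, y, A) is a monotone submodular function of the seed set S: MOV(S) ≤ MOV(T) whenever S ⊆ T, and MOV(S ∪ {x}) − MOV(S) ≥ MOV(T ∪ {x}) − MOV(T) whenever S ⊆ T and x ∉ T. -/

import Mathlib

/-!
`MOV` is a combination, with nonnegative weights `2 * sceneWeight E p y`, of the coverage
functions `S ↦ reachCount y S A`. The set of nodes reached from `S` is the union of the sets
reached from its single elements, so each coverage function is monotone (`reachCount_mono`) and
submodular (`reachCount_submodular`); both properties survive nonnegative combinations.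
-/

open Finset

attribute [local instance] Classical.propDecidable

/-- Number of nodes of `A` reachable from seed set `S` in scenario `y`. -/
noncomputable def reachCount {V : Type*} (y : Finset (V × V)) (S A : Finset V) : ℕ :=
  (A.filter (fun v => ∃ s ∈ S, Relation.ReflTransGen (fun a b => (a, b) ∈ y) s v)).card

/-- Probability of the live-graph scenario `y ⊆ E` under edge probabilities `p`. -/
noncomputable def sceneWeight {V : Type*} (E : Finset (V × V)) (p : V × V → ℝ)
    (y : Finset (V × V)) : ℝ :=
  (∏ e ∈ y, p e) * (∏ e ∈ E \ y, (1 - p e))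

/-- The two-candidate margin-of-victory objective
`MOV(S) = 2 · Σ_{y ⊆ E} w(y) · f(S, y, A)`, where `A` is the set of voters ranking the
target candidate second. -/
noncomputable def MOV {V : Type*} (E : Finset (V × V)) (p : V × V → ℝ)
    (A S : Finset V) : ℝ :=
  2 * ∑ y ∈ E.powerset, sceneWeight E p y * (reachCount y S A : ℝ)

theorem reachCount_mono {V : Type*} (y : Finset (V × V)) (A : Finset V) {S T : Finset V}
    (h : S ⊆ T) : reachCount y S A ≤ reachCount y T A := by
  unfold reachCount
  refine card_le_card (monotone_filter_right A ?_)
  rintro v _ ⟨s, hs, hr⟩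
  exact ⟨s, h hs, hr⟩

/-- Diminishing returns in a fixed scenario, in subtraction-free form. With `R S` the nodes of
`A` reached from `S`, it follows from `R (insert x T) ⊆ R (insert x S) ∪ R T` and
`R S ⊆ R (insert x S) ∩ R T` by inclusion–exclusion. -/
theorem reachCount_submodular {V : Type*} (y : Finset (V × V)) (A : Finset V)
    {S T : Finset V} (h : S ⊆ T) (x : V) :
    reachCount y (insert x T) A + reachCount y S A ≤
      reachCount y (insert x S) A + reachCount y T A := by
  unfold reachCount
  refine (Nat.add_le_add (card_le_card ?_) (card_le_card ?_)).trans
    (card_union_add_card_inter _ _).le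
  · intro v hv
    simp only [mem_union, mem_filter, mem_insert] at hv ⊢
    obtain ⟨hA, s, rfl | hs, hr⟩ := hv
    · exact Or.inl ⟨hA, s, Or.inl rfl, hr⟩
    · exact Or.inr ⟨hA, s, hs, hr⟩
  · intro v hv
    simp only [mem_inter, mem_filter, mem_insert] at hv ⊢
    obtain ⟨hA, s, hs, hr⟩ := hv
    exact ⟨⟨hA, s, Or.inr hs, hr⟩, hA, s, h hs, hr⟩

theorem sceneWeight_nonneg {V : Type*} (E : Finset (V × V)) (p : V × V → ℝ)
    (hp : ∀ e ∈ E, 0 ≤ p e ∧ p e ≤ 1) {y : Finset (V × V)} (hy : y ∈ E.powerset) :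
    0 ≤ sceneWeight E p y := by
  refine mul_nonneg (prod_nonneg fun e he => (hp e (mem_powerset.mp hy he)).1)
    (prod_nonneg fun e he => ?_)
  linarith [(hp e (mem_sdiff.mp he).1).2]

/-- Theorem 1: in a two-candidate election, `MOV` is monotone and
submodular as a function of the seed set. -/
theorem MOV_monotone_submodular {V : Type*} [Fintype V] (E : Finset (V × V))
    (p : V × V → ℝ) (hp : ∀ e ∈ E, 0 ≤ p e ∧ p e ≤ 1) (A : Finset V) :
    (∀ S T : Finset V, S ⊆ T → MOV E p A S ≤ MOV E p A T) ∧
    (∀ S T : Finset V, ∀ x : V, S ⊆ T → x ∉ T →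
      MOV E p A (insert x S) - MOV E p A S ≥
        MOV E p A (insert x T) - MOV E p A T) := by
  refine ⟨fun S T h => ?_, fun S T x h _ => ?_⟩
  · unfold MOV
    refine mul_le_mul_of_nonneg_left (sum_le_sum fun y hy => ?_) zero_le_two
    exact mul_le_mul_of_nonneg_left (Nat.cast_le.mpr (reachCount_mono y A h))
      (sceneWeight_nonneg E p hp hy)
  · suffices MOV E p A (insert x T) + MOV E p A S ≤ MOV E p A (insert x S) + MOV E p A T by
      linarith
    unfold MOV
    rw [← mul_add, ← mul_add, ← sum_add_distrib, ← sum_add_distrib]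
    refine mul_le_mul_of_nonneg_left (sum_le_sum fun y hy => ?_) zero_le_two
    rw [← mul_add, ← mul_add]
    refine mul_le_mul_of_nonneg_left ?_ (sceneWeight_nonneg E p hp hy)
    exact_mod_cast reachCount_submodular y A h x
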